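/- arXiv:2407.20614 — 5 statements merged into one kernel-verified Lean document; each statement's English description precedes it below -/
import Mathlib

section
/- Let V be an n-dimensional vector space over the finite field 𝔽_q, let t ≥ 1 and n ≥ 2t+1, and let F be a cover-free family of 2t-dimensional subspaces of V. Then |F| ≤ [n-1 choose t]_q / [2t-1 choose t]_q. -/
/-- A family of subspaces is cover-free if there are no three distinct members
`F₀, F₁, F₂` with `F₀ ≤ (F₀ ⊓ F₁) ⊔ (F₀ ⊓ F₂)`. -/
def IsCoverFree {K V : Type*} [Field K] [AddCommGroup V] [Module K V]
    (F : Set (Submodule K V)) : Prop :=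
  ¬ ∃ F₀ F₁ F₂ : Submodule K V, F₀ ∈ F ∧ F₁ ∈ F ∧ F₂ ∈ F ∧
    F₀ ≠ F₁ ∧ F₀ ≠ F₂ ∧ F₁ ≠ F₂ ∧ F₀ ≤ (F₀ ⊓ F₁) ⊔ (F₀ ⊓ F₂)

/-- The Gaussian binomial coefficient `[m choose k]_q` as a rational number. -/
def GaussQ (q m k : ℕ) : ℚ :=
  ∏ i ∈ Finset.range k, ((q : ℚ) ^ (m - i) - 1) / ((q : ℚ) ^ (k - i) - 1)

/-! Fix a flag of subspaces of dimensions `t - 1`, `t`, `t + 1` and move it by a uniformly random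
`g ∈ GL(V)`. For a member `A` of `F`, call a subspace of `A` *own* if it lies in no other member,
and consider the event that `g` maps some member of the flag to an own subspace of `A`. The image
of a flag is a chain, and an own subspace of one member is contained in no own subspace of
another, so the events of distinct members are disjoint. It remains to show that each has
probability at least `[2t-1 choose t]_q / [n-1 choose t]_q`.

Cover-freeness says that two non-own subspaces of `A` never span `A`. Averaging over a
complementary pair of dimensions `t - 1` and `t + 1` shows that the proportions of non-own
subspaces in these two dimensions add up to at most `1`. Averaging over a spread of `q ^ t + 1`
pairwise complementary `t`-dimensional subspaces shows that at most `1 / (q ^ t + 1)` of those are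
non-own. The event contains three disjoint ones, according to how far the image of the flag stays
inside `A`, and these two estimates bound the sum of their probabilities from below.
-/

open Module Finset
open scoped Pointwise

section Averaging

open scoped Classical in
theorem dens_smul_mem {G X : Type*} [Group G] [Fintype G] [MulAction G X] (x : X) (S : Set X) :
    (({g | g • x ∈ S} : Finset G).dens : ℚ) =
      (S ∩ MulAction.orbit G x).ncard / (MulAction.orbit G x).ncard := by
  set H := MulAction.stabilizer G x
  have card_smul_mem (T : Set X) :
      Nat.card {g : G | g • x ∈ T} = Nat.card H * (T ∩ MulAction.orbit G x).ncard := by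
    have hinj := MulAction.injective_ofQuotientStabilizer G x
    have himage : MulAction.ofQuotientStabilizer G x '' (MulAction.ofQuotientStabilizer G x ⁻¹' T) =
        T ∩ MulAction.orbit G x := by
      rw [Set.image_preimage_eq_inter_range]
      congr 1
      exact Set.ext fun y => ⟨fun ⟨z, hz⟩ => hz ▸ MulAction.ofQuotientStabilizer_mem_orbit G x z,
        fun ⟨g, hg⟩ => ⟨QuotientGroup.mk g, hg⟩⟩
    rw [← himage, Set.ncard_image_of_injective _ hinj]
    exact QuotientGroup.card_preimage_mk H (MulAction.ofQuotientStabilizer G x ⁻¹' T)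
  have hH : (Nat.card H : ℚ) ≠ 0 := Nat.cast_ne_zero.mpr Nat.card_pos.ne'
  have hG : Fintype.card G = Nat.card H * (MulAction.orbit G x).ncard := by
    simpa [Set.ncard_univ] using card_smul_mem Set.univ
  have hS := card_smul_mem S
  rw [Set.coe_ofPred, Nat.card_eq_fintype_card, Fintype.card_subtype] at hS
  rw [nnratCast_dens, hS, hG]
  push_cast
  exact mul_div_mul_left _ _ hH

theorem ncard_setOf_fst_mem_and_snd_mem {α β : Type*} [Finite α] [Finite β] {s : Set α}
    {t : α → Set β} {c : ℚ} (ht : ∀ a ∈ s, ((t a).ncard : ℚ) = c) :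
    ({p : α × β | p.1 ∈ s ∧ p.2 ∈ t p.1}.ncard : ℚ) = s.ncard * c := by
  classical
  have := Fintype.ofFinite s
  let e : {p : α × β | p.1 ∈ s ∧ p.2 ∈ t p.1} ≃ Σ a : s, t a :=
    { toFun p := ⟨⟨p.1.1, p.2.1⟩, ⟨p.1.2, p.2.2⟩⟩
      invFun x := ⟨(x.1, x.2), x.1.2, x.2.2⟩
      left_inv _ := rfl
      right_inv _ := rfl }
  have hfib (a : s) : (Nat.card (t a) : ℚ) = c := ht a a.2
  rw [← Nat.card_coe_set_eq, Nat.card_congr e, Nat.card_sigma, Nat.cast_sum,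
    sum_congr rfl fun a _ => hfib a, sum_const, nsmul_eq_mul, card_univ, Set.fintypeCard_eq_ncard]

end Averaging

section Transitivity

variable {K V : Type*} [Field K] [AddCommGroup V] [Module K V]

theorem smul_span_range_eq {ι : Type*} {v w : ι → V} {g : V ≃ₗ[K] V} (hg : ∀ i, g (v i) = w i) :
    g • Submodule.span K (Set.range v) = Submodule.span K (Set.range w) := by
  rw [← funext hg, Set.range_comp' g]
  exact Submodule.map_span (g : V →ₗ[K] V) _

theorem finrank_smul (g : V ≃ₗ[K] V) (E : Submodule K V) :
    finrank K (g • E : Submodule K V) = finrank K E :=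
  LinearEquiv.finrank_map_eq g E

variable [FiniteDimensional K V]

theorem exists_linearEquiv_apply_eq {ι : Type*} {v w : ι → V} (hv : LinearIndependent K v)
    (hw : LinearIndependent K w) : ∃ g : V ≃ₗ[K] V, ∀ i, g (v i) = w i := by
  obtain ⟨g, hg⟩ := Submodule.exists_linearEquiv_restrict_eq
    ((Basis.span hv).equiv (Basis.span hw) (.refl ι))
  refine ⟨g, fun i => ?_⟩
  have := hg (Basis.span hv i)
  rwa [Basis.equiv_apply, Basis.span_apply, Basis.span_apply, eq_comm] at this

theorem exists_linearIndependent_span_eq (E : Submodule K V) {k : ℕ} (hE : finrank K E = k) :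
    ∃ v : Fin k → V, LinearIndependent K v ∧ Submodule.span K (Set.range v) = E := by
  let b := (finBasis K E).reindex (finCongr hE)
  refine ⟨E.subtype ∘ b, b.linearIndependent.map' _ E.ker_subtype, ?_⟩
  rw [Set.range_comp, ← Submodule.map_span, b.span_eq, Submodule.map_subtype_top]

theorem orbit_submodule_eq (E : Submodule K V) :
    MulAction.orbit (V ≃ₗ[K] V) E = {U : Submodule K V | finrank K U = finrank K E} := by
  ext U
  constructor
  · rintro ⟨g, rfl⟩
    exact finrank_smul g E
  · intro hU
    obtain ⟨v, hv, hvE⟩ := exists_linearIndependent_span_eq E rfl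
    obtain ⟨w, hw, hwU⟩ := exists_linearIndependent_span_eq U hU
    obtain ⟨g, hg⟩ := exists_linearEquiv_apply_eq hv hw
    exact ⟨g, hvE ▸ hwU ▸ smul_span_range_eq hg⟩

theorem orbit_submodule_prod_eq {E : Submodule K V} {e : V} (he : e ∉ E) :
    MulAction.orbit (V ≃ₗ[K] V) (E, e) =
      {p : Submodule K V × V | finrank K p.1 = finrank K E ∧ p.2 ∉ p.1} := by
  ext ⟨U, u⟩
  constructor
  · rintro ⟨g, hg⟩
    obtain ⟨rfl, rfl⟩ := Prod.ext_iff.mp hg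
    refine ⟨finrank_smul g E, ?_⟩
    rintro ⟨x, hx, hxe⟩
    obtain rfl : x = e := g.injective hxe
    exact he hx
  · rintro ⟨hU, hu⟩
    obtain ⟨v, hv, hvE⟩ := exists_linearIndependent_span_eq E rfl
    obtain ⟨w, hw, hwU⟩ := exists_linearIndependent_span_eq U hU
    obtain ⟨g, hg⟩ := exists_linearEquiv_apply_eq
      (linearIndependent_finSnoc.mpr ⟨hv, hvE ▸ he⟩) (linearIndependent_finSnoc.mpr ⟨hw, hwU ▸ hu⟩)
    have hgv (i) : g (v i) = w i := by simpa only [Fin.snoc_castSucc] using hg i.castSucc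
    have hge : g e = u := by simpa only [Fin.snoc_last] using hg (Fin.last _)
    exact ⟨g, Prod.ext (hvE ▸ hwU ▸ smul_span_range_eq hgv) hge⟩

end Transitivity

section LevelDensity

variable {K V : Type*} [Field K] [AddCommGroup V] [Module K V]

/-- The proportion of the `k`-dimensional subspaces that belong to the family `S`; it is `0` when
there are no `k`-dimensional subspaces. -/
noncomputable def levelDensity (S : Set (Submodule K V)) (k : ℕ) : ℚ :=
  {U | U ∈ S ∧ finrank K U = k}.ncard / {U : Submodule K V | finrank K U = k}.ncard

theorem levelDensity_nonneg (S : Set (Submodule K V)) (k : ℕ) : 0 ≤ levelDensity S k := by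
  unfold levelDensity
  positivity

theorem exists_submodule_finrank_eq [FiniteDimensional K V] {k : ℕ} (hk : k ≤ finrank K V) :
    ∃ U : Submodule K V, finrank K U = k := by
  obtain ⟨v, hv⟩ := exists_linearIndependent_of_le_finrank hk
  exact ⟨Submodule.span K (Set.range v), by rw [finrank_span_eq_card hv, Fintype.card_fin]⟩

theorem ncard_preimage_map_subtype {A : Submodule K V} {S : Set (Submodule K V)}
    (hS : S ⊆ Set.Iic A) (k : ℕ) :
    {X | X ∈ Submodule.map A.subtype ⁻¹' S ∧ finrank K X = k}.ncard =
      {U | U ∈ S ∧ finrank K U = k}.ncard := by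
  rw [← Set.ncard_image_of_injective _ (Submodule.map_injective_of_injective A.subtype_injective)]
  congr 1
  ext U
  constructor
  · rintro ⟨X, ⟨hX, hk⟩, rfl⟩
    exact ⟨hX, by rwa [Submodule.finrank_map_subtype_eq]⟩
  · rintro ⟨hU, hk⟩
    obtain ⟨X, rfl⟩ : ∃ X, Submodule.map A.subtype X = U :=
      ⟨_, Submodule.map_comap_eq_of_le ((hS hU).trans_eq A.range_subtype.symm)⟩
    exact ⟨X, ⟨hU, by rwa [Submodule.finrank_map_subtype_eq] at hk⟩, rfl⟩

theorem exists_notMem_of_finrank_lt [FiniteDimensional K V] {E : Submodule K V}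
    (hE : finrank K E < finrank K V) : ∃ e, e ∉ E := by
  refine SetLike.exists_not_mem_of_ne_top E ?_
  rintro rfl
  exact hE.ne (finrank_top K V)

variable [Finite V]

theorem levelDensity_compl (S : Set (Submodule K V)) {k : ℕ} (hk : k ≤ finrank K V) :
    levelDensity Sᶜ k = 1 - levelDensity S k := by
  have hcard : {U | U ∈ S ∧ finrank K U = k}.ncard + {U | U ∈ Sᶜ ∧ finrank K U = k}.ncard =
      {U : Submodule K V | finrank K U = k}.ncard := by
    rw [← Set.ncard_union_eq (Set.disjoint_left.mpr fun U hU hU' => hU'.1 hU.1)]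
    congr 1
    ext U
    simp only [Set.mem_union, Set.mem_ofPred_eq, Set.mem_compl_iff]
    tauto
  have hne : ({U : Submodule K V | finrank K U = k}.ncard : ℚ) ≠ 0 :=
    Nat.cast_ne_zero.mpr (Set.ncard_ne_zero_of_mem (exists_submodule_finrank_eq hk).choose_spec)
  rw [levelDensity, levelDensity, eq_sub_iff_add_eq, ← add_div, div_eq_one_iff_eq hne, add_comm]
  exact_mod_cast hcard

theorem levelDensity_eq_mul_levelDensity_Iic {A : Submodule K V} {S : Set (Submodule K V)}
    (hS : S ⊆ Set.Iic A) (k : ℕ) :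
    levelDensity S k =
      levelDensity (Submodule.map A.subtype ⁻¹' S) k * levelDensity (Set.Iic A) k := by
  have hA : {U | U ∈ Set.Iic A ∧ finrank K U = k}.ncard =
      {X : Submodule K A | finrank K X = k}.ncard := by
    rw [← ncard_preimage_map_subtype subset_rfl]
    congr 1
    exact Set.ext fun X => and_iff_right (Submodule.map_subtype_le A X)
  rw [levelDensity, levelDensity, levelDensity, ncard_preimage_map_subtype hS, hA, ← mul_div_assoc,
    div_mul_cancel_of_imp fun h => ?_]
  rw [← hA, Nat.cast_eq_zero, Set.ncard_eq_zero] at h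
  rw [Nat.cast_eq_zero, Set.ncard_eq_zero]
  exact Set.eq_empty_of_subset_empty fun U hU => h.subset ⟨hS hU.1, hU.2⟩

theorem levelDensity_eq_one_sub_mul {A : Submodule K V} {S : Set (Submodule K V)}
    (hS : S ⊆ Set.Iic A) {k : ℕ} (hk : k ≤ finrank K A) :
    levelDensity S k =
      (1 - levelDensity (Submodule.map A.subtype ⁻¹' S)ᶜ k) * levelDensity (Set.Iic A) k := by
  rw [levelDensity_compl _ hk, sub_sub_cancel, levelDensity_eq_mul_levelDensity_Iic hS]

theorem ncard_sdiff_submodule {q : ℕ} (hq : Nat.card K = q) {U A : Submodule K V} (h : U ≤ A) :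
    (((A : Set V) \ U).ncard : ℚ) = q ^ finrank K A - q ^ finrank K U := by
  have hcard (W : Submodule K V) : (W : Set V).ncard = q ^ finrank K W :=
    hq ▸ Module.natCard_eq_pow_finrank
  rw [Set.cast_ncard_sdiff h (Set.toFinite _), hcard, hcard]
  push_cast
  rfl

theorem ncard_compl_submodule {q : ℕ} (hq : Nat.card K = q) (U : Submodule K V) :
    ((Uᶜ : Set V).ncard : ℚ) = q ^ finrank K V - q ^ finrank K U := by
  rw [Set.compl_eq_univ_sdiff, ← Submodule.top_coe (R := K), ncard_sdiff_submodule hq le_top,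
    finrank_top]

section Random

variable [Fintype (V ≃ₗ[K] V)]

open scoped Classical in
theorem dens_smul_mem_eq_levelDensity (E : Submodule K V) (S : Set (Submodule K V)) :
    (({g | g • E ∈ S} : Finset (V ≃ₗ[K] V)).dens : ℚ) = levelDensity S (finrank K E) := by
  rw [dens_smul_mem, orbit_submodule_eq]
  rfl

open scoped Classical in
theorem dens_smul_mem_and_apply_mem {q : ℕ} (hq : Nat.card K = q) {E : Submodule K V} {e : V}
    (he : e ∉ E) {S : Set (Submodule K V)} {T : Set V} {c : ℚ}
    (hT : ∀ U ∈ S, finrank K U = finrank K E → ((T \ U).ncard : ℚ) = c) :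
    (({g | g • E ∈ S ∧ g e ∈ T} : Finset (V ≃ₗ[K] V)).dens : ℚ) =
      levelDensity S (finrank K E) * (c / (q ^ finrank K V - q ^ finrank K E)) := by
  let P : Set (Submodule K V × V) := {p | p.1 ∈ S ∧ p.2 ∈ T}
  have horbit : MulAction.orbit (V ≃ₗ[K] V) (E, e) =
      {p | p.1 ∈ {U : Submodule K V | finrank K U = finrank K E} ∧ p.2 ∈ (p.1ᶜ : Set V)} :=
    orbit_submodule_prod_eq he
  have hinter : P ∩ MulAction.orbit (V ≃ₗ[K] V) (E, e) =
      {p | p.1 ∈ {U | U ∈ S ∧ finrank K U = finrank K E} ∧ p.2 ∈ T \ p.1} := by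
    rw [horbit]
    ext p
    exact and_and_and_comm
  have hcompl (U) (hU : U ∈ {U : Submodule K V | finrank K U = finrank K E}) :
      ((Uᶜ : Set V).ncard : ℚ) = q ^ finrank K V - q ^ finrank K E :=
    hU ▸ ncard_compl_submodule hq U
  have hdens : (({g | g • E ∈ S ∧ g e ∈ T} : Finset (V ≃ₗ[K] V)).dens : ℚ) =
      (P ∩ MulAction.orbit (V ≃ₗ[K] V) (E, e)).ncard /
        (MulAction.orbit (V ≃ₗ[K] V) (E, e)).ncard := by
    convert dens_smul_mem (E, e) P
    exact Iff.rfl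
  rw [hdens, hinter, horbit, ncard_setOf_fst_mem_and_snd_mem fun U hU => hT U hU.1 hU.2,
    ncard_setOf_fst_mem_and_snd_mem hcompl, mul_div_mul_comm, levelDensity]

end Random

theorem levelDensity_Iic_zero (A : Submodule K V) : levelDensity (Set.Iic A) 0 = 1 := by
  have hset : {U | U ∈ Set.Iic A ∧ finrank K U = 0} = {U : Submodule K V | finrank K U = 0} :=
    Set.ext fun U => and_iff_right_of_imp fun hU =>
      (Submodule.finrank_eq_zero.mp hU).trans_le bot_le
  have hne : ({U : Submodule K V | finrank K U = 0}.ncard : ℚ) ≠ 0 :=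
    Nat.cast_ne_zero.mpr (Set.ncard_ne_zero_of_mem (finrank_bot K V))
  rw [levelDensity, hset, div_self hne]

theorem levelDensity_Iic_succ {q : ℕ} (hq : Nat.card K = q) (A : Submodule K V) {k : ℕ}
    (hk : k < finrank K V) :
    levelDensity (Set.Iic A) (k + 1) = levelDensity (Set.Iic A) k *
      ((q ^ finrank K A - q ^ k) / (q ^ finrank K V - q ^ k)) := by
  classical
  have : Finite (V ≃ₗ[K] V) := DFunLike.finite _
  have := Fintype.ofFinite (V ≃ₗ[K] V)
  obtain ⟨E, rfl⟩ := exists_submodule_finrank_eq hk.le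
  obtain ⟨e, he⟩ := exists_notMem_of_finrank_lt hk
  have hmem (g : V ≃ₗ[K] V) :
      g • (E ⊔ K ∙ e) ∈ Set.Iic A ↔ g • E ∈ Set.Iic A ∧ g e ∈ (A : Set V) := by
    rw [Submodule.smul_sup', Set.mem_Iic, sup_le_iff, Submodule.smul_span,
      Set.smul_set_singleton, Submodule.span_singleton_le_iff_mem]
    rfl
  rw [← Submodule.finrank_sup_span_singleton he, ← dens_smul_mem_eq_levelDensity]
  simp only [hmem]
  convert dens_smul_mem_and_apply_mem hq he fun U (hU : U ∈ Set.Iic A) hUE =>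
    hUE ▸ ncard_sdiff_submodule hq hU

theorem levelDensity_Iic {q : ℕ} (hq : Nat.card K = q) (A : Submodule K V) {k : ℕ}
    (hk : k ≤ finrank K V) :
    levelDensity (Set.Iic A) k = ∏ i ∈ range k,
      ((q : ℚ) ^ finrank K A - q ^ i) / (q ^ finrank K V - q ^ i) := by
  induction k with
  | zero => rw [levelDensity_Iic_zero, prod_range_zero]
  | succ k ih => rw [levelDensity_Iic_succ hq A hk, ih (Nat.le_of_succ_le hk), prod_range_succ]

end LevelDensity

section Codisjoint

variable {K V : Type*} [Field K] [AddCommGroup V] [Module K V] [Finite V]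

theorem sum_levelDensity_le_one {ι : Type*} [Fintype ι] {N : Set (Submodule K V)}
    (hN : ∀ X ∈ N, ∀ Y ∈ N, ¬Codisjoint X Y) {S : ι → Submodule K V}
    (hS : Pairwise fun i j => Codisjoint (S i) (S j)) :
    ∑ i, levelDensity N (finrank K (S i)) ≤ 1 := by
  classical
  have : Finite (V ≃ₗ[K] V) := DFunLike.finite _
  have := Fintype.ofFinite (V ≃ₗ[K] V)
  have hdisj : (Set.univ : Set ι).PairwiseDisjoint
      fun i => ({g | g • S i ∈ N} : Finset (V ≃ₗ[K] V)) := by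
    intro i _ j _ hij
    refine disjoint_left.mpr fun g hi hj => ?_
    rw [mem_filter_univ] at hi hj
    exact hN _ hi _ hj ((hS hij).map_orderIso (Submodule.orderIsoMapComap g))
  simp_rw [← dens_smul_mem_eq_levelDensity]
  rw [← NNRat.cast_sum, ← dens_biUnion (by rwa [coe_univ])]
  exact_mod_cast dens_le_one

theorem levelDensity_add_levelDensity_le_one {N : Set (Submodule K V)}
    (hN : ∀ X ∈ N, ∀ Y ∈ N, ¬Codisjoint X Y) {k l : ℕ} (hkl : k + l = finrank K V) :
    levelDensity N k + levelDensity N l ≤ 1 := by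
  obtain ⟨U, rfl⟩ := exists_submodule_finrank_eq (Nat.le.intro hkl)
  obtain ⟨U', hU'⟩ := U.exists_isCompl
  obtain rfl : finrank K U' = l := by
    have := Submodule.finrank_add_eq_of_isCompl hU'
    lia
  have hpair : Pairwise fun i j => Codisjoint (![U, U'] i) (![U, U'] j) := by
    intro i j hij
    fin_cases i <;> fin_cases j
    · exact absurd rfl hij
    · exact hU'.codisjoint
    · exact hU'.codisjoint.symm
    · exact absurd rfl hij
  exact (Fin.sum_univ_two _).symm.trans_le (sum_levelDensity_le_one hN hpair)

theorem codisjoint_of_finrank_eq_one {L W : Type*} [Field L] [AddCommGroup W] [Module L W]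
    (hW : finrank L W = 2) {P Q : Submodule L W} (hP : finrank L P = 1) (hQ : finrank L Q = 1)
    (hPQ : P ≠ Q) : Codisjoint P Q := by
  have : FiniteDimensional L W := .of_finrank_pos (by lia)
  have hlt : P < P ⊔ Q := left_lt_sup.mpr fun hQP =>
    hPQ (Submodule.eq_of_le_of_finrank_eq hQP (hQ.trans hP.symm)).symm
  have hfinrank := Submodule.finrank_lt_finrank_of_lt hlt
  have hle := Submodule.finrank_le (P ⊔ Q)
  refine codisjoint_iff.mpr (Submodule.eq_top_of_finrank_eq ?_)
  lia

open scoped LinearAlgebra.Projectivization in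
theorem exists_spread [Finite K] {q t : ℕ} (hq : Nat.card K = q) (ht : t ≠ 0)
    (hV : finrank K V = 2 * t) :
    ∃ S : Fin (q ^ t + 1) → Submodule K V,
      (∀ i, finrank K (S i) = t) ∧ Pairwise fun i j => Codisjoint (S i) (S j) := by
  have : Fact (ringChar K).Prime := ⟨CharP.char_is_prime K _⟩
  have : NeZero t := ⟨ht⟩
  let L := FiniteField.Extension K (ringChar K) t
  have hKL : finrank K L = t := FiniteField.finrank_extension K (ringChar K) t
  have hLL : finrank L (L × L) = 2 := by rw [finrank_prod, finrank_self]
  have e : (L × L) ≃ₗ[K] V := LinearEquiv.ofFinrankEq _ _ (by rw [finrank_prod, hKL, hV, two_mul])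
  have card_points : Nat.card (ℙ L (L × L)) = q ^ t + 1 := by
    rw [Projectivization.card_of_finrank_two L _ hLL, FiniteField.natCard_extension, hq]
  let points : Fin (q ^ t + 1) ≃ ℙ L (L × L) := (Finite.equivFinOfCardEq card_points).symm
  refine ⟨fun i => ((points i).submodule.restrictScalars K).map (e : (L × L) →ₗ[K] V), fun i => ?_,
    fun i j hij => ?_⟩
  · rw [LinearEquiv.finrank_map_eq]
    calc finrank K (points i).submodule
        = finrank K L * finrank L (points i).submodule := (finrank_mul_finrank ..).symm
      _ = t := by rw [hKL, (points i).finrank_submodule, mul_one]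
  · have hne : (points i).submodule ≠ (points j).submodule := fun h =>
      hij (points.injective (Projectivization.submodule_injective h))
    have hcodisj := codisjoint_of_finrank_eq_one hLL (points i).finrank_submodule
      (points j).finrank_submodule hne
    exact ((Submodule.codisjoint_restrictScalars_iff ..).mpr hcodisj).map_orderIso
      (Submodule.orderIsoMapComap e)

theorem levelDensity_half_le [Finite K] {q t : ℕ} (hq : Nat.card K = q) (ht : t ≠ 0)
    (hV : finrank K V = 2 * t) {N : Set (Submodule K V)}
    (hN : ∀ X ∈ N, ∀ Y ∈ N, ¬Codisjoint X Y) :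
    levelDensity N t ≤ 1 / (q ^ t + 1) := by
  obtain ⟨S, hSt, hS⟩ := exists_spread hq ht hV
  have hsum := sum_levelDensity_le_one hN hS
  simp only [hSt, sum_const, card_univ, Fintype.card_fin, nsmul_eq_mul] at hsum
  rw [le_div_iff₀' (by positivity)]
  exact_mod_cast hsum

end Codisjoint

section NonSpanning

variable {K V : Type*} [Field K] [Finite K] [AddCommGroup V] [Module K V] [Finite V]

theorem one_lt_of_natCard_eq {q : ℕ} (hq : Nat.card K = q) : (1 : ℚ) < q := by
  exact_mod_cast hq ▸ Finite.one_lt_card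

theorem levelDensity_Iic_add_two_le {q : ℕ} (hq : Nat.card K = q) {A : Submodule K V}
    (hA : finrank K A < finrank K V) {k : ℕ} (hk : k + 2 ≤ finrank K A) :
    levelDensity (Set.Iic A) (k + 2) ≤ levelDensity (Set.Iic A) k *
      (((q : ℚ) ^ finrank K V - q ^ finrank K A) / (q ^ finrank K V - q ^ k)) := by
  have one_lt_q := one_lt_of_natCard_eq hq
  have two_le_q : (2 : ℚ) ≤ q := by exact_mod_cast one_lt_q
  rw [levelDensity_Iic_succ hq A (by lia), levelDensity_Iic_succ hq A (by lia), mul_assoc]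
  set M : ℚ := (q : ℚ) ^ finrank K A
  set N : ℚ := (q : ℚ) ^ finrank K V
  have hxy : (q : ℚ) ^ k < q ^ (k + 1) := pow_lt_pow_right₀ one_lt_q (by lia)
  have hyM : (q : ℚ) ^ (k + 1) < M := pow_lt_pow_right₀ one_lt_q (by lia)
  have hMN : M < N := pow_lt_pow_right₀ one_lt_q hA
  have hM_le : M ≤ N - M := by
    have : M * q ≤ N := (pow_succ (q : ℚ) _).symm.trans_le (pow_le_pow_right₀ one_lt_q.le hA)
    nlinarith
  have hx_nonneg : 0 ≤ (q : ℚ) ^ k := by positivity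
  refine mul_le_mul_of_nonneg_left ?_ (levelDensity_nonneg _ _)
  calc (M - q ^ k) / (N - q ^ k) * ((M - q ^ (k + 1)) / (N - q ^ (k + 1)))
      ≤ (M - q ^ k) / (N - q ^ k) :=
        mul_le_of_le_one_right (div_nonneg (by linarith) (by linarith))
          ((div_le_one (by linarith)).mpr (by linarith))
    _ ≤ (N - M) / (N - q ^ k) := div_le_div_of_nonneg_right (by linarith) (by linarith)

theorem levelDensity_Iic_add_two_le_add {q : ℕ} (hq : Nat.card K = q) {A : Submodule K V}
    (hA : finrank K A < finrank K V) {S : Set (Submodule K V)} (hS : S ⊆ Set.Iic A)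
    (hspan : ∀ X Y : Submodule K A, X.map A.subtype ∉ S → Y.map A.subtype ∉ S → ¬Codisjoint X Y)
    {k : ℕ} (hk : k + (k + 2) = finrank K A) :
    levelDensity (Set.Iic A) (k + 2) ≤ levelDensity S k *
      (((q : ℚ) ^ finrank K V - q ^ finrank K A) / (q ^ finrank K V - q ^ k)) +
        levelDensity S (k + 2) := by
  set N := (Submodule.map A.subtype ⁻¹' S)ᶜ
  rw [levelDensity_eq_one_sub_mul hS (by lia), levelDensity_eq_one_sub_mul hS (by lia)]
  have hN : levelDensity N k + levelDensity N (k + 2) ≤ 1 :=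
    levelDensity_add_levelDensity_le_one (fun X hX Y hY => hspan X Y hX hY) hk
  calc levelDensity (Set.Iic A) (k + 2)
      = levelDensity N (k + 2) * levelDensity (Set.Iic A) (k + 2) +
          (1 - levelDensity N (k + 2)) * levelDensity (Set.Iic A) (k + 2) := by ring
    _ ≤ (1 - levelDensity N k) * (levelDensity (Set.Iic A) k * _) +
          (1 - levelDensity N (k + 2)) * levelDensity (Set.Iic A) (k + 2) := by
        gcongr
        · exact levelDensity_nonneg _ _
        · linarith [levelDensity_nonneg N (k + 2)]
        · linarith
        · exact levelDensity_Iic_add_two_le hq hA (by lia)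
    _ = _ := by rw [mul_assoc]

theorem levelDensity_Iic_succ_mul_le {q : ℕ} (hq : Nat.card K = q) {A : Submodule K V}
    (hA : finrank K A < finrank K V) {S : Set (Submodule K V)} (hS : S ⊆ Set.Iic A)
    (hspan : ∀ X Y : Submodule K A, X.map A.subtype ∉ S → Y.map A.subtype ∉ S → ¬Codisjoint X Y)
    {t : ℕ} (ht : t ≠ 0) (hAt : finrank K A = 2 * t) :
    levelDensity (Set.Iic A) (t + 1) *
        (((q : ℚ) ^ finrank K V - q ^ finrank K A) / (q ^ finrank K A - 1)) ≤
      levelDensity S t *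
        (((q : ℚ) ^ finrank K V - q ^ finrank K A) / (q ^ finrank K V - q ^ t)) := by
  have one_lt_q := one_lt_of_natCard_eq hq
  have hN : levelDensity (Submodule.map A.subtype ⁻¹' S)ᶜ t ≤ 1 / ((q : ℚ) ^ t + 1) :=
    levelDensity_half_le hq ht hAt fun X hX Y hY => hspan X Y hX hY
  rw [levelDensity_eq_one_sub_mul hS (by lia), levelDensity_Iic_succ hq A (by lia)]
  have hT : 1 < (q : ℚ) ^ t := one_lt_pow₀ one_lt_q ht
  have hTN : (q : ℚ) ^ t < q ^ finrank K V := pow_lt_pow_right₀ one_lt_q (by lia)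
  have hMN : (q : ℚ) ^ finrank K A ≤ q ^ finrank K V := pow_le_pow_right₀ one_lt_q.le hA.le
  have hM : (q : ℚ) ^ finrank K A = (q ^ t) ^ 2 := by rw [hAt, mul_comm, pow_mul]
  rw [hM] at hMN ⊢
  set T : ℚ := (q : ℚ) ^ t
  set N : ℚ := (q : ℚ) ^ finrank K V
  set a := levelDensity (Set.Iic A) t
  calc a * ((T ^ 2 - T) / (N - T)) * ((N - T ^ 2) / (T ^ 2 - 1))
      = (1 - 1 / (T + 1)) * a * ((N - T ^ 2) / (N - T)) := by
        have : T ^ 2 - 1 = (T - 1) * (T + 1) := by ring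
        rw [this]
        have h1 : T - 1 ≠ 0 := by linarith
        have h2 : T + 1 ≠ 0 := by linarith
        have h3 : N - T ≠ 0 := by linarith
        field_simp
        ring
    _ ≤ _ := by
        gcongr
        exact div_nonneg (by linarith) (by linarith)

end NonSpanning

section Flag

variable {K V : Type*} [Field K] [AddCommGroup V] [Module K V] [Fintype (V ≃ₗ[K] V)]

open scoped Classical in
theorem sum_dens_exists_smul_mem_le_one {ι : Type*} {s : Finset ι} {S : ι → Set (Submodule K V)}
    (hS : ∀ i ∈ s, ∀ j ∈ s, i ≠ j → ∀ U ∈ S i, ∀ W ∈ S j, ¬U ≤ W) {C : Set (Submodule K V)}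
    (hC : IsChain (· ≤ ·) C) :
    ∑ i ∈ s, (({g | ∃ E ∈ C, g • E ∈ S i} : Finset (V ≃ₗ[K] V)).dens : ℚ) ≤ 1 := by
  have hdisj : (s : Set ι).PairwiseDisjoint
      fun i => ({g | ∃ E ∈ C, g • E ∈ S i} : Finset (V ≃ₗ[K] V)) := by
    intro i hi j hj hij
    refine disjoint_left.mpr fun g hgi hgj => ?_
    rw [mem_filter_univ] at hgi hgj
    obtain ⟨⟨E, hE, hgE⟩, E', hE', hgE'⟩ := hgi, hgj
    rcases hC.total hE hE' with h | h
    · exact hS i hi j hj hij _ hgE _ hgE' (Submodule.map_mono h)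
    · exact hS j hj i hi hij.symm _ hgE' _ hgE (Submodule.map_mono h)
  rw [← NNRat.cast_sum, ← dens_biUnion hdisj]
  exact_mod_cast dens_le_one

variable [Finite V]

open scoped Classical in
theorem dens_smul_mem_and_apply_notMem {q : ℕ} (hq : Nat.card K = q) {E A : Submodule K V} {e : V}
    (he : e ∉ E) {S : Set (Submodule K V)} (hS : S ⊆ Set.Iic A) :
    (({g | g • E ∈ S ∧ g e ∉ A} : Finset (V ≃ₗ[K] V)).dens : ℚ) =
      levelDensity S (finrank K E) *
        ((q ^ finrank K V - q ^ finrank K A) / (q ^ finrank K V - q ^ finrank K E)) := by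
  have hcard (U) (hU : U ∈ S) (_ : finrank K U = finrank K E) :
      (((Aᶜ : Set V) \ U).ncard : ℚ) = q ^ finrank K V - q ^ finrank K A := by
    rw [sdiff_eq_left.mpr (Set.disjoint_compl_left_iff_subset.mpr (hS hU)),
      ncard_compl_submodule hq]
  convert dens_smul_mem_and_apply_mem hq he hcard
  exact Iff.rfl

open scoped Classical in
theorem levelDensity_add_add_le_dens {q : ℕ} (hq : Nat.card K = q) {A E : Submodule K V} {e e' : V}
    (he : e ∉ E) (he' : e' ∉ E ⊔ K ∙ e) {S : Set (Submodule K V)} (hS : S ⊆ Set.Iic A) :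
    levelDensity S (finrank K E) * (((q : ℚ) ^ finrank K V - q ^ finrank K A) /
        (q ^ finrank K V - q ^ finrank K E)) +
      levelDensity S (finrank K E + 1) * (((q : ℚ) ^ finrank K V - q ^ finrank K A) /
        (q ^ finrank K V - q ^ (finrank K E + 1))) +
      levelDensity S (finrank K E + 2) ≤
    ({g | ∃ W ∈ ({E, E ⊔ K ∙ e, E ⊔ K ∙ e ⊔ K ∙ e'} : Set (Submodule K V)), g • W ∈ S} :
      Finset (V ≃ₗ[K] V)).dens := by
  set E₁ := E ⊔ K ∙ e
  set E₂ := E₁ ⊔ K ∙ e'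
  have hE₁ : finrank K E₁ = finrank K E + 1 := Submodule.finrank_sup_span_singleton he
  have hE₂ : finrank K E₂ = finrank K E + 2 := by
    rw [Submodule.finrank_sup_span_singleton he', hE₁]
  have mem_of_smul_mem {W : Submodule K V} {w : V} (hw : w ∈ W) {g : V ≃ₗ[K] V} (hg : g • W ∈ S) :
      g w ∈ A := hS hg (Submodule.smul_mem_pointwise_smul w g W hw)
  have he₁ : e ∈ E₁ := Submodule.mem_sup_right (Submodule.mem_span_singleton_self e)
  have he₂ : e ∈ E₂ := Submodule.mem_sup_left he₁
  have he₂' : e' ∈ E₂ := Submodule.mem_sup_right (Submodule.mem_span_singleton_self e')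
  let H₀ : Finset (V ≃ₗ[K] V) := {g | g • E ∈ S ∧ g e ∉ A}
  let H₁ : Finset (V ≃ₗ[K] V) := {g | g • E₁ ∈ S ∧ g e' ∉ A}
  let H₂ : Finset (V ≃ₗ[K] V) := {g | g • E₂ ∈ S}
  have hdisj₁ : Disjoint H₀ H₁ := disjoint_filter.mpr fun g _ h₀ h₁ =>
    h₀.2 (mem_of_smul_mem he₁ h₁.1)
  have hdisj₂ : Disjoint (H₀ ∪ H₁) H₂ := by
    refine disjoint_union_left.mpr ⟨disjoint_filter.mpr fun g _ h₀ h₂ => ?_,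
      disjoint_filter.mpr fun g _ h₁ h₂ => ?_⟩
    · exact h₀.2 (mem_of_smul_mem he₂ h₂)
    · exact h₁.2 (mem_of_smul_mem he₂' h₂)
  rw [← hE₂, ← hE₁, ← dens_smul_mem_and_apply_notMem hq he hS,
    ← dens_smul_mem_and_apply_notMem hq he' hS, ← dens_smul_mem_eq_levelDensity E₂]
  norm_cast
  rw [← dens_union_of_disjoint hdisj₁, ← dens_union_of_disjoint hdisj₂]
  refine dens_le_dens fun g hg => ?_
  simp only [H₀, H₁, H₂, mem_union, mem_filter_univ] at hg ⊢
  rcases hg with (h | h) | h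
  · exact ⟨E, .inl rfl, h.1⟩
  · exact ⟨E₁, .inr (.inl rfl), h.1⟩
  · exact ⟨E₂, .inr (.inr rfl), h⟩

end Flag

section GaussQ

theorem gaussQ_pos {q m k : ℕ} (hq : (1 : ℚ) < q) (hk : k ≤ m) : 0 < GaussQ q m k := by
  refine prod_pos fun i hi => ?_
  rw [mem_range] at hi
  have hpow {j : ℕ} (hj : j ≠ 0) : 0 < (q : ℚ) ^ j - 1 := sub_pos.mpr (one_lt_pow₀ hq hj)
  exact div_pos (hpow (by lia)) (hpow (by lia))

theorem gaussQ_div_gaussQ {q m n k : ℕ} (hq : (1 : ℚ) < q) (hm : k ≤ m) (hn : k ≤ n) :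
    GaussQ q m k / GaussQ q n k = ∏ i ∈ range k,
      ((q : ℚ) ^ (m + 1) - q ^ (i + 1)) / (q ^ (n + 1) - q ^ (i + 1)) := by
  rw [GaussQ, GaussQ, ← prod_div_distrib]
  refine prod_congr rfl fun i hi => ?_
  rw [mem_range] at hi
  have hden : (q : ℚ) ^ (k - i) - 1 ≠ 0 := (sub_pos.mpr (one_lt_pow₀ hq (by lia))).ne'
  have hscale {l : ℕ} (hl : k ≤ l) :
      (q : ℚ) ^ (l + 1) - q ^ (i + 1) = (q ^ (l - i) - 1) * q ^ (i + 1) := by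
    rw [sub_one_mul, ← pow_add]
    congr 2
    lia
  rw [div_div_div_cancel_right₀ hden, hscale hm, hscale hn, mul_div_mul_right _ _ (by positivity)]

theorem levelDensity_Iic_succ_eq_gaussQ {K V : Type*} [Field K] [Finite K] [AddCommGroup V]
    [Module K V] [Finite V] {q : ℕ} (hq : Nat.card K = q) {A : Submodule K V} {m n k : ℕ}
    (hA : finrank K A = m + 1) (hV : finrank K V = n + 1) (hm : k ≤ m) (hn : k ≤ n) :
    levelDensity (Set.Iic A) (k + 1) =
      GaussQ q m k / GaussQ q n k * (((q : ℚ) ^ (m + 1) - 1) / (q ^ (n + 1) - 1)) := by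
  rw [levelDensity_Iic hq A (by lia), prod_range_succ', hA, hV, pow_zero,
    gaussQ_div_gaussQ (one_lt_of_natCard_eq hq) hm hn]

end GaussQ

section HittingProbability

variable {K V : Type*} [Field K] [Finite K] [AddCommGroup V] [Module K V] [Finite V]

theorem gaussQ_div_le_levelDensity_add_add {q : ℕ} (hq : Nat.card K = q) {A : Submodule K V}
    (hA : finrank K A < finrank K V) {S : Set (Submodule K V)} (hS : S ⊆ Set.Iic A)
    (hspan : ∀ X Y : Submodule K A, X.map A.subtype ∉ S → Y.map A.subtype ∉ S → ¬Codisjoint X Y)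
    {k : ℕ} (hk : finrank K A = 2 * (k + 1)) :
    GaussQ q (finrank K A - 1) (k + 1) / GaussQ q (finrank K V - 1) (k + 1) ≤
      levelDensity S k * (((q : ℚ) ^ finrank K V - q ^ finrank K A) / (q ^ finrank K V - q ^ k)) +
      levelDensity S (k + 1) * (((q : ℚ) ^ finrank K V - q ^ finrank K A) /
        (q ^ finrank K V - q ^ (k + 1))) +
      levelDensity S (k + 2) := by
  have one_lt_q := one_lt_of_natCard_eq hq
  have houter := levelDensity_Iic_add_two_le_add hq hA hS hspan (k := k) (by lia)
  have hmiddle := levelDensity_Iic_succ_mul_le hq hA hS hspan (t := k + 1) (by lia) hk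
  obtain ⟨m, hm⟩ : ∃ m, finrank K A = m + 1 := ⟨2 * k + 1, hk⟩
  obtain ⟨n, hn⟩ : ∃ n, finrank K V = n + 1 := Nat.exists_eq_succ_of_ne_zero (by lia)
  have hM : 0 < (q : ℚ) ^ (m + 1) - 1 := sub_pos.mpr (one_lt_pow₀ one_lt_q m.succ_ne_zero)
  have hN : 0 < (q : ℚ) ^ (n + 1) - 1 := sub_pos.mpr (one_lt_pow₀ one_lt_q n.succ_ne_zero)
  have htop := levelDensity_Iic_succ_eq_gaussQ hq hm hn (k := k + 1) (by lia) (by lia)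
  have hsplit : levelDensity (Set.Iic A) (k + 2) + levelDensity (Set.Iic A) (k + 2) *
      (((q : ℚ) ^ (n + 1) - q ^ (m + 1)) / (q ^ (m + 1) - 1)) =
        GaussQ q m (k + 1) / GaussQ q n (k + 1) := by
    rw [htop]
    field_simp
    ring
  rw [hm, hn] at houter hmiddle ⊢
  rw [Nat.add_sub_cancel, Nat.add_sub_cancel, ← hsplit]
  linarith

open scoped Classical in
theorem exists_isChain_gaussQ_div_le_dens [Fintype (V ≃ₗ[K] V)] {q t : ℕ} (hq : Nat.card K = q)
    (ht : t ≠ 0) (hV : 2 * t < finrank K V) :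
    ∃ C : Set (Submodule K V), IsChain (· ≤ ·) C ∧ ∀ (A : Submodule K V) (S : Set (Submodule K V)),
      finrank K A = 2 * t → S ⊆ Set.Iic A →
      (∀ X Y : Submodule K A, X.map A.subtype ∉ S → Y.map A.subtype ∉ S → ¬Codisjoint X Y) →
      GaussQ q (2 * t - 1) t / GaussQ q (finrank K V - 1) t ≤
        ({g | ∃ E ∈ C, g • E ∈ S} : Finset (V ≃ₗ[K] V)).dens := by
  obtain ⟨k, rfl⟩ := Nat.exists_eq_succ_of_ne_zero ht
  obtain ⟨E, rfl⟩ := exists_submodule_finrank_eq (K := K) (V := V) (k := k) (by lia)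
  obtain ⟨e, he⟩ := exists_notMem_of_finrank_lt (E := E) (by lia)
  obtain ⟨e', he'⟩ := exists_notMem_of_finrank_lt (E := E ⊔ K ∙ e)
    (by rw [Submodule.finrank_sup_span_singleton he]; lia)
  refine ⟨{E, E ⊔ K ∙ e, E ⊔ K ∙ e ⊔ K ∙ e'}, ?_, fun A S hA hS hspan => ?_⟩
  · have hchain : IsChain (· ≤ ·) {E ⊔ K ∙ e, E ⊔ K ∙ e ⊔ K ∙ e'} := .pair le_sup_left
    refine hchain.insert fun W hW _ => .inl ?_
    rcases hW with rfl | rfl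
    · exact le_sup_left
    · exact le_sup_of_le_left le_sup_left
  · rw [Nat.succ_eq_add_one] at hA ⊢
    rw [← hA]
    exact (gaussQ_div_le_levelDensity_add_add hq (by lia) hS hspan hA).trans
      (levelDensity_add_add_le_dens hq he he' hS)

end HittingProbability

section CoverFree

variable {K V : Type*} [Field K] [AddCommGroup V] [Module K V]

/-- The subspaces of `A` that lie in no member of the family `F` other than `A` itself. -/
def ownSubspaces (F : Set (Submodule K V)) (A : Submodule K V) : Set (Submodule K V) :=
  {U | U ≤ A ∧ ∀ B ∈ F, U ≤ B → B = A}

theorem ownSubspaces_subset_Iic (F : Set (Submodule K V)) (A : Submodule K V) :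
    ownSubspaces F A ⊆ Set.Iic A :=
  fun _ hU => hU.1

theorem not_le_of_mem_ownSubspaces {F : Set (Submodule K V)} {A B U W : Submodule K V}
    (hB : B ∈ F) (hAB : A ≠ B) (hU : U ∈ ownSubspaces F A) (hW : W ∈ ownSubspaces F B) : ¬U ≤ W :=
  fun hUW => hAB (hU.2 B hB (hUW.trans hW.1)).symm

theorem not_codisjoint_of_notMem_ownSubspaces {F : Set (Submodule K V)} (hF : IsCoverFree F)
    (hanti : IsAntichain (· ≤ ·) F) {A : Submodule K V} (hA : A ∈ F) {X Y : Submodule K A}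
    (hX : X.map A.subtype ∉ ownSubspaces F A) (hY : Y.map A.subtype ∉ ownSubspaces F A) :
    ¬Codisjoint X Y := by
  intro hXY
  have exists_le {Z : Submodule K A} (hZ : Z.map A.subtype ∉ ownSubspaces F A) :
      ∃ B ∈ F, B ≠ A ∧ Z.map A.subtype ≤ A ⊓ B := by
    by_contra! h
    exact hZ ⟨Submodule.map_subtype_le A Z, fun B hB hZB => by_contra fun hBA =>
      h B hB hBA (le_inf (Submodule.map_subtype_le A Z) hZB)⟩
  obtain ⟨B₁, hB₁, hne₁, hX₁⟩ := exists_le hX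
  obtain ⟨B₂, hB₂, hne₂, hY₂⟩ := exists_le hY
  have hcover : A ≤ (A ⊓ B₁) ⊔ (A ⊓ B₂) :=
    calc A = (X ⊔ Y).map A.subtype := by rw [hXY.eq_top, Submodule.map_subtype_top]
      _ = X.map A.subtype ⊔ Y.map A.subtype := Submodule.map_sup ..
      _ ≤ (A ⊓ B₁) ⊔ (A ⊓ B₂) := sup_le_sup hX₁ hY₂
  have hne : B₁ ≠ B₂ := by
    rintro rfl
    rw [sup_idem] at hcover
    exact hne₁.symm (hanti.eq hA hB₁ (hcover.trans inf_le_right))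
  exact hF ⟨A, B₁, B₂, hA, hB₁, hB₂, hne₁.symm, hne₂.symm, hne, hcover⟩

end CoverFree

theorem stmt0 (q n t : ℕ) (K : Type*) [Field K] [Fintype K] (hK : Fintype.card K = q)
    (V : Type*) [AddCommGroup V] [Module K V] [FiniteDimensional K V]
    (hV : Module.finrank K V = n) (ht : 1 ≤ t) (hn : 2 * t + 1 ≤ n)
    (F : Set (Submodule K V)) (hdim : ∀ A ∈ F, Module.finrank K A = 2 * t)
    (hcf : IsCoverFree F) :
    (F.ncard : ℚ) ≤ GaussQ q (n - 1) t / GaussQ q (2 * t - 1) t := by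
  classical
  have : Finite V := Module.finite_of_finite K
  have : Finite (V ≃ₗ[K] V) := DFunLike.finite _
  have := Fintype.ofFinite (V ≃ₗ[K] V)
  have hq : Nat.card K = q := Nat.card_eq_fintype_card.trans hK
  have one_lt_q := one_lt_of_natCard_eq hq
  have hanti : IsAntichain (· ≤ ·) F := fun A hA B hB hne hle =>
    hne (Submodule.eq_of_le_of_finrank_eq hle ((hdim A hA).trans (hdim B hB).symm))
  obtain ⟨C, hC, hdens⟩ := exists_isChain_gaussQ_div_le_dens hq (Nat.ne_of_gt ht) (hV ▸ hn)
  have hsum : ∑ _ ∈ F.toFinite.toFinset, GaussQ q (2 * t - 1) t / GaussQ q (n - 1) t ≤ 1 := by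
    refine (sum_le_sum fun A hA => ?_).trans
      (sum_dens_exists_smul_mem_le_one (S := ownSubspaces F) ?_ hC)
    · rw [Set.Finite.mem_toFinset] at hA
      exact hV ▸ hdens A _ (hdim A hA) (ownSubspaces_subset_Iic F A) fun X Y =>
        not_codisjoint_of_notMem_ownSubspaces hcf hanti hA
    · intro _ _ B hB hAB U hU W hW
      exact not_le_of_mem_ownSubspaces (F.toFinite.mem_toFinset.mp hB) hAB hU hW
  rw [sum_const, nsmul_eq_mul, ← Set.ncard_eq_toFinset_card, ← inv_div, ← div_eq_mul_inv] at hsum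
  exact (div_le_one (div_pos (gaussQ_pos one_lt_q (by lia)) (gaussQ_pos one_lt_q (by lia)))).mp hsum
end

section
/- Let V be an n-dimensional vector space over the finite field 𝔽_q, embedded in an (n+1)-dimensional space V' = E ⊕ V where E is a 1-dimensional subspace with E ∩ V = {0}. If F is a cover-free family of k-dimensional subspaces of V, then F' = {E ⊕ F : F ∈ F} is a cover-free family of (k+1)-dimensional subspaces of V'. -/
/-!
By the modular law, `A ↦ E ⊔ A` carries the interval `[E ⊓ V, V]` isomorphically onto `[E, E ⊔ V]`
(the diamond isomorphism), so it preserves `⊓`, `⊔` and reflects `≤`. Hence a covering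
`E ⊔ A ≤ ((E ⊔ A) ⊓ (E ⊔ B)) ⊔ ((E ⊔ A) ⊓ (E ⊔ C))` comes from a covering
`A ≤ (A ⊓ B) ⊔ (A ⊓ C)` of subspaces of `V`.
-/

section ModularLattice

variable {α : Type*} [Lattice α] [IsModularLattice α] {a b e v : α}

theorem sup_inf_eq_of_mem_Icc_inf (ha : a ∈ Set.Icc (e ⊓ v) v) : (e ⊔ a) ⊓ v = a := by
  rw [sup_comm, sup_inf_assoc_of_le e ha.2, sup_eq_left.mpr ha.1]

theorem sup_inf_sup_eq_of_mem_Icc_inf (ha : a ≤ v) (hb : b ∈ Set.Icc (e ⊓ v) v) :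
    (e ⊔ a) ⊓ (e ⊔ b) = e ⊔ a ⊓ b :=
  calc
    (e ⊔ a) ⊓ (e ⊔ b) = e ⊔ a ⊓ (e ⊔ b) := sup_inf_assoc_of_le a le_sup_left
    _ = e ⊔ a ⊓ ((e ⊔ b) ⊓ v) := by rw [inf_comm (e ⊔ b), ← inf_assoc, inf_eq_left.mpr ha]
    _ = e ⊔ a ⊓ b := by rw [sup_inf_eq_of_mem_Icc_inf hb]

theorem sup_le_sup_left_iff_of_mem_Icc_inf (ha : a ≤ v) (hb : b ∈ Set.Icc (e ⊓ v) v) :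
    e ⊔ a ≤ e ⊔ b ↔ a ≤ b := by
  refine ⟨fun h ↦ ?_, fun h ↦ sup_le_sup_left h e⟩
  calc
    a ≤ (e ⊔ b) ⊓ v := le_inf (le_sup_right.trans h) ha
    _ = b := sup_inf_eq_of_mem_Icc_inf hb

end ModularLattice

theorem finrank_sup_of_disjoint {K M : Type*} [DivisionRing K] [AddCommGroup M] [Module K M]
    {s t : Submodule K M} [FiniteDimensional K s] [FiniteDimensional K t] (h : Disjoint s t) :
    Module.finrank K ↥(s ⊔ t) = Module.finrank K s + Module.finrank K t := by
  rw [← Submodule.finrank_sup_add_finrank_inf_eq s t, h.eq_bot, finrank_bot, add_zero]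

theorem IsCoverFree.image_sup {K M : Type*} [Field K] [AddCommGroup M] [Module K M]
    {E V : Submodule K M} {F : Set (Submodule K M)} (hF : F ⊆ Set.Icc (E ⊓ V) V)
    (hcf : IsCoverFree F) : IsCoverFree ((fun A => E ⊔ A) '' F) := by
  rintro ⟨_, _, _, ⟨A, hA, rfl⟩, ⟨B, hB, rfl⟩, ⟨C, hC, rfl⟩, hAB, hAC, hBC, hcover⟩
  have hAV : A ≤ V := (hF hA).2
  have hmem : A ⊓ B ⊔ A ⊓ C ∈ Set.Icc (E ⊓ V) V :=
    ⟨le_sup_of_le_left (le_inf (hF hA).1 (hF hB).1),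
      sup_le (inf_le_of_left_le hAV) (inf_le_of_left_le hAV)⟩
  have hlift : E ⊔ A ≤ E ⊔ (A ⊓ B ⊔ A ⊓ C) := by
    rwa [sup_inf_sup_eq_of_mem_Icc_inf hAV (hF hB), sup_inf_sup_eq_of_mem_Icc_inf hAV (hF hC),
      ← sup_sup_distrib_left] at hcover
  exact hcf ⟨A, B, C, hA, hB, hC, ne_of_apply_ne _ hAB, ne_of_apply_ne _ hAC,
    ne_of_apply_ne _ hBC, (sup_le_sup_left_iff_of_mem_Icc_inf hAV hmem).mp hlift⟩

theorem stmt6_general {K M : Type*} [Field K] [AddCommGroup M] [Module K M] {k : ℕ}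
    {V E : Submodule K M} [FiniteDimensional K E] (hEV : Disjoint E V) {F : Set (Submodule K M)}
    (hF : ∀ A ∈ F, A ≤ V ∧ FiniteDimensional K A ∧ Module.finrank K A = k)
    (hcf : IsCoverFree F) :
    IsCoverFree ((fun A => E ⊔ A) '' F) ∧
      ∀ B ∈ (fun A => E ⊔ A) '' F, Module.finrank K B = k + Module.finrank K E := by
  refine ⟨hcf.image_sup fun A hA ↦ ⟨hEV.eq_bot.trans_le bot_le, (hF A hA).1⟩, ?_⟩
  rintro _ ⟨A, hA, rfl⟩
  obtain ⟨hAV, _, hk⟩ := hF A hA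
  rw [finrank_sup_of_disjoint (hEV.mono_right hAV), hk, add_comm]

theorem stmt6 (q n k : ℕ) (K : Type*) [Field K] [Fintype K] (hK : Fintype.card K = q)
    (V' : Type*) [AddCommGroup V'] [Module K V'] [FiniteDimensional K V']
    (hV' : Module.finrank K V' = n + 1)
    (V E : Submodule K V') (hV : Module.finrank K V = n) (hE : Module.finrank K E = 1)
    (hEV : E ⊓ V = ⊥) (hsum : E ⊔ V = ⊤)
    (F : Set (Submodule K V'))
    (hF : ∀ A ∈ F, A ≤ V ∧ Module.finrank K A = k)
    (hcf : IsCoverFree F) :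
    IsCoverFree ((fun A => E ⊔ A) '' F) ∧
      ∀ B ∈ (fun A => E ⊔ A) '' F, Module.finrank K B = k + 1 := by
  exact hE ▸ stmt6_general (disjoint_iff.mpr hEV)
    (fun A hA ↦ ⟨(hF A hA).1, inferInstance, (hF A hA).2⟩) hcf
end

section
/- Let V be an n-dimensional vector space over the finite field 𝔽_q. If F is a q-Steiner system S_q(t, 2t-1, n) on V, then F is a cover-free family of (2t-1)-dimensional subspaces of V. -/
/-! Two distinct members of a Steiner system have no `t`-dimensional subspace in common, so they
meet in dimension at most `t - 1`. Two such intersections span at most `2t - 2` dimensions, too few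
to cover a member. -/

open Module

theorem exists_submodule_le_finrank_eq {R M : Type*} [Semiring R] [StrongRankCondition R]
    [AddCommMonoid M] [Module R M] {S : Submodule R M} {t : ℕ} (h : t ≤ finrank R S) :
    ∃ T ≤ S, finrank R T = t := by
  have : Nontrivial R := nontrivial_of_invariantBasisNumber R
  obtain ⟨f, hf⟩ := exists_linearIndependent_of_le_finrank h
  refine ⟨(Submodule.span R (Set.range f)).map S.subtype, Submodule.map_subtype_le _ _, ?_⟩
  rw [Submodule.finrank_map_subtype_eq, finrank_span_eq_card hf, Fintype.card_fin]

section DivisionRing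

variable {K V : Type*} [DivisionRing K] [AddCommGroup V] [Module K V]

theorem finrank_sup_le_finrank_add_finrank (S T : Submodule K V) :
    finrank K ↥(S ⊔ T) ≤ finrank K S + finrank K T := by
  by_cases hfin : FiniteDimensional K ↥(S ⊔ T)
  · have : FiniteDimensional K S :=
      Submodule.finiteDimensional_of_le (le_sup_left : S ≤ S ⊔ T)
    have : FiniteDimensional K T :=
      Submodule.finiteDimensional_of_le (le_sup_right : T ≤ S ⊔ T)
    exact Submodule.finrank_add_le_finrank_add_finrank S T
  · simp [finrank_of_not_finite hfin]

/-- A `t`-packing of subspaces: a family in which every `t`-dimensional subspace lies in at most one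
member. This is the uniqueness half of the definition of a `q`-Steiner system; the dimension of the
members is not part of the definition. -/
def IsSubspacePacking (t : ℕ) (F : Set (Submodule K V)) : Prop :=
  ∀ T : Submodule K V, finrank K T = t → {A ∈ F | T ≤ A}.Subsingleton

theorem IsSubspacePacking.pairwise_finrank_inf_lt {t : ℕ} {F : Set (Submodule K V)}
    (hF : IsSubspacePacking t F) : F.Pairwise fun A B ↦ finrank K ↥(A ⊓ B) < t := by
  intro A hA B hB hne
  by_contra! hle
  obtain ⟨T, hT, hTt⟩ := exists_submodule_le_finrank_eq hle
  exact hne (hF T hTt ⟨hA, hT.trans inf_le_left⟩ ⟨hB, hT.trans inf_le_right⟩)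

end DivisionRing

section Field

variable {K V : Type*} [Field K] [AddCommGroup V] [Module K V] {t : ℕ} {F : Set (Submodule K V)}

theorem isCoverFree_of_pairwise_finrank_inf_lt (hdim : ∀ A ∈ F, 2 * t - 1 ≤ finrank K A)
    (hF : F.Pairwise fun A B ↦ finrank K ↥(A ⊓ B) < t) : IsCoverFree F := by
  rintro ⟨A, B, C, hA, hB, hC, hAB, hAC, -, hcover⟩
  have hA_eq : A = A ⊓ B ⊔ A ⊓ C := hcover.antisymm (sup_le inf_le_left inf_le_left)
  have hA_le : finrank K A ≤ finrank K ↥(A ⊓ B) + finrank K ↥(A ⊓ C) :=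
    (congrArg (fun S : Submodule K V ↦ finrank K S) hA_eq).trans_le
      (finrank_sup_le_finrank_add_finrank _ _)
  have hAB_lt := hF hA hB hAB
  have hAC_lt := hF hA hC hAC
  have hA_ge := hdim A hA
  omega

theorem stmt7_general (hdim : ∀ A ∈ F, 2 * t - 1 ≤ finrank K A) (hF : IsSubspacePacking t F) :
    IsCoverFree F :=
  isCoverFree_of_pairwise_finrank_inf_lt hdim hF.pairwise_finrank_inf_lt

end Field

theorem stmt7 (q n t : ℕ) (K : Type*) [Field K] [Fintype K] (hK : Fintype.card K = q)
    (V : Type*) [AddCommGroup V] [Module K V] [FiniteDimensional K V]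
    (hV : Module.finrank K V = n)
    (H : Set (Submodule K V))
    (hdim : ∀ A ∈ H, Module.finrank K A = 2 * t - 1)
    (hSteiner : ∀ T : Submodule K V, Module.finrank K T = t → ∃! A, A ∈ H ∧ T ≤ A) :
    IsCoverFree H :=
  stmt7_general (fun A hA ↦ (hdim A hA).ge) fun T hT _ hA _ hB ↦ (hSteiner T hT).unique hA hB
end

section
/- Let V be a finite-dimensional vector space over the finite field 𝔽_q, let U be a u-dimensional subspace of V, let M be an m-dimensional and W a (u-m)-dimensional subspace of U with M ∩ W = {0} and W ⊕ M = U, and let 1 ≤ k ≤ u-m. Then: (i) for distinct k-dimensional subspaces B, B' of W, the families [B ⊕ M choose k, 0]_M and [B' ⊕ M choose k, 0]_M are disjoint; (ii) [U choose k, 0]_M is the disjoint union of the families [B ⊕ M choose k, 0]_M over all k-dimensional subspaces B of W. -/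
/-- `[X choose k, 0]_M`: the family of all `k`-dimensional subspaces `A` of `X`
with `dim (M ∩ A) = 0`. -/
def ZeroFam {K V : Type*} [Field K] [AddCommGroup V] [Module K V]
    (M X : Submodule K V) (k : ℕ) : Set (Submodule K V) :=
  {A | A ≤ X ∧ Module.finrank K A = k ∧ M ⊓ A = ⊥}

/-!
Everything is read modulo `M`. A subspace `A` meeting `M` trivially has the same dimension as its
image in `V ⧸ M`, so if `A ≤ B ⊔ M` with `B` also disjoint from `M` and of the same finite
dimension, then the two images coincide, i.e. `A ⊔ M = B ⊔ M`. By the modular law, `B ↦ B ⊔ M` and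
`X ↦ X ⊓ W` are inverse bijections between the subspaces of `W` and the subspaces between `M` and
`W ⊔ M`. Hence the only `B ≤ W` whose family contains `A` is `(A ⊔ M) ⊓ W`.
-/

section ModularLattice

variable {α : Type*} [Lattice α] [IsModularLattice α] {b m w x : α}

theorem sup_inf_eq_of_le_of_disjoint [OrderBot α] (hb : b ≤ w) (hmw : Disjoint m w) :
    (b ⊔ m) ⊓ w = b := by
  rw [sup_inf_assoc_of_le m hb, hmw.eq_bot, sup_bot_eq]

theorem inf_sup_eq_of_le_of_le_sup (hm : m ≤ x) (hx : x ≤ w ⊔ m) : x ⊓ w ⊔ m = x := by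
  rw [inf_sup_assoc_of_le w hm, inf_eq_left.mpr hx]

end ModularLattice

section Quotient

open Module Submodule

variable {R V : Type*} [AddCommGroup V]

theorem map_mkQ_eq_map_mkQ_iff_sup_eq_sup [Ring R] [Module R V] {A B M : Submodule R V} :
    A.map M.mkQ = B.map M.mkQ ↔ A ⊔ M = B ⊔ M := by
  rw [← (comap_injective_of_surjective M.mkQ_surjective).eq_iff, comap_map_mkQ, comap_map_mkQ,
    sup_comm M, sup_comm M]

theorem finrank_map_mkQ_of_disjoint [Ring R] [Module R V] {A M : Submodule R V}
    (h : Disjoint A M) : finrank R (A.map M.mkQ) = finrank R A := by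
  have hinj : Function.Injective (M.mkQ.domRestrict A) := by
    rwa [LinearMap.injective_domRestrict_iff, ker_mkQ]
  rw [← LinearMap.range_domRestrict, LinearMap.finrank_range_of_inj hinj]

theorem finrank_eq_of_sup_eq_sup_of_disjoint [Ring R] [Module R V] {A B M : Submodule R V}
    (hA : Disjoint A M) (hB : Disjoint B M) (h : A ⊔ M = B ⊔ M) : finrank R A = finrank R B := by
  rw [← finrank_map_mkQ_of_disjoint hA, ← finrank_map_mkQ_of_disjoint hB,
    map_mkQ_eq_map_mkQ_iff_sup_eq_sup.mpr h]

theorem sup_eq_sup_of_le_sup_of_finrank_eq [DivisionRing R] [Module R V] {A B M : Submodule R V}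
    [FiniteDimensional R B] (hA : Disjoint A M) (hB : Disjoint B M) (hAB : A ≤ B ⊔ M)
    (h : finrank R A = finrank R B) : A ⊔ M = B ⊔ M := by
  have hle : A.map M.mkQ ≤ B.map M.mkQ := by
    rwa [map_le_iff_le_comap, comap_map_mkQ, sup_comm]
  refine map_mkQ_eq_map_mkQ_iff_sup_eq_sup.mp (eq_of_le_of_finrank_eq hle ?_)
  rw [finrank_map_mkQ_of_disjoint hA, finrank_map_mkQ_of_disjoint hB, h]

end Quotient

namespace ZeroFam

open Module

variable {K V : Type*} [Field K] [AddCommGroup V] [Module K V] {A B M W X Y : Submodule K V} {k : ℕ}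

theorem mono (h : X ≤ Y) : ZeroFam M X k ⊆ ZeroFam M Y k :=
  fun _ ⟨hA, hAk, hMA⟩ ↦ ⟨hA.trans h, hAk, hMA⟩

theorem disjoint_of_mem (hA : A ∈ ZeroFam M X k) : Disjoint A M :=
  (disjoint_iff.mpr hA.2.2).symm

theorem sup_inf_eq_of_mem (hk : 0 < k) (hMW : Disjoint M W) (hB : B ≤ W) (hBk : finrank K B = k)
    (hA : A ∈ ZeroFam M (B ⊔ M) k) : (A ⊔ M) ⊓ W = B := by
  have : FiniteDimensional K B := .of_finrank_pos (hBk ▸ hk)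
  have hsup : A ⊔ M = B ⊔ M := sup_eq_sup_of_le_sup_of_finrank_eq (disjoint_of_mem hA)
    (hMW.symm.mono_left hB) hA.1 (hA.2.1.trans hBk.symm)
  rw [hsup, sup_inf_eq_of_le_of_disjoint hB hMW]

theorem pairwiseDisjoint_sup (hk : 0 < k) (hMW : Disjoint M W) :
    {B : Submodule K V | B ≤ W ∧ finrank K B = k}.PairwiseDisjoint fun B ↦ ZeroFam M (B ⊔ M) k :=
  fun _ ⟨hB, hBk⟩ _ ⟨hB', hBk'⟩ hne ↦ Set.disjoint_left.mpr fun _ hA hA' ↦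
    hne <| (sup_inf_eq_of_mem hk hMW hB hBk hA).symm.trans
      (sup_inf_eq_of_mem hk hMW hB' hBk' hA')

theorem exists_mem_sup (hMW : Disjoint M W) (hA : A ∈ ZeroFam M (W ⊔ M) k) :
    ∃ B ≤ W, finrank K B = k ∧ A ∈ ZeroFam M (B ⊔ M) k := by
  have hsup : (A ⊔ M) ⊓ W ⊔ M = A ⊔ M :=
    inf_sup_eq_of_le_of_le_sup le_sup_right (sup_le hA.1 le_sup_right)
  have hfinrank : finrank K ((A ⊔ M) ⊓ W : Submodule K V) = finrank K A :=
    finrank_eq_of_sup_eq_sup_of_disjoint (hMW.symm.mono_left inf_le_right) (disjoint_of_mem hA) hsup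
  exact ⟨(A ⊔ M) ⊓ W, inf_le_right, hfinrank.trans hA.2.1, le_sup_left.trans_eq hsup.symm, hA.2⟩

theorem sup_eq_biUnion (hMW : Disjoint M W) :
    ZeroFam M (W ⊔ M) k =
      ⋃ B ∈ {B : Submodule K V | B ≤ W ∧ finrank K B = k}, ZeroFam M (B ⊔ M) k := by
  refine Set.Subset.antisymm (fun A hA ↦ ?_)
    (Set.iUnion₂_subset fun B hB ↦ mono (sup_le_sup_right hB.1 M))
  obtain ⟨B, hB, hBk, hAB⟩ := exists_mem_sup hMW hA
  exact Set.mem_biUnion ⟨hB, hBk⟩ hAB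

end ZeroFam

theorem stmt8_general {K V : Type*} [Field K] [AddCommGroup V] [Module K V]
    {U M W : Submodule K V} {k : ℕ} (hMW : Disjoint M W) (hsum : W ⊔ M = U) (hk : 0 < k) :
    (∀ B B' : Submodule K V, B ≤ W → B' ≤ W →
      Module.finrank K B = k → Module.finrank K B' = k → B ≠ B' →
      ZeroFam M (B ⊔ M) k ∩ ZeroFam M (B' ⊔ M) k = ∅) ∧
    ZeroFam M U k =
      ⋃ B ∈ {B : Submodule K V | B ≤ W ∧ Module.finrank K B = k}, ZeroFam M (B ⊔ M) k :=
  ⟨fun _ _ hB hB' hBk hBk' hne ↦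
    (ZeroFam.pairwiseDisjoint_sup hk hMW ⟨hB, hBk⟩ ⟨hB', hBk'⟩ hne).inter_eq,
    hsum ▸ ZeroFam.sup_eq_biUnion hMW⟩

theorem stmt8 (q u m k : ℕ) (K : Type*) [Field K] [Fintype K] (hK : Fintype.card K = q)
    (V : Type*) [AddCommGroup V] [Module K V] [FiniteDimensional K V]
    (U M W : Submodule K V)
    (hU : Module.finrank K U = u) (hM : Module.finrank K M = m)
    (hMU : M ≤ U) (hWU : W ≤ U) (hW : Module.finrank K W = u - m)
    (hMW : M ⊓ W = ⊥) (hsum : W ⊔ M = U)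
    (hk1 : 1 ≤ k) (hk2 : k ≤ u - m) :
    (∀ B B' : Submodule K V, B ≤ W → B' ≤ W →
      Module.finrank K B = k → Module.finrank K B' = k → B ≠ B' →
      ZeroFam M (B ⊔ M) k ∩ ZeroFam M (B' ⊔ M) k = ∅) ∧
    ZeroFam M U k =
      ⋃ B ∈ {B : Submodule K V | B ≤ W ∧ Module.finrank K B = k}, ZeroFam M (B ⊔ M) k :=
  stmt8_general (disjoint_iff.mpr hMW) hsum hk1
end

section
/- Let V be an n-dimensional vector space over the finite field 𝔽_q with n ≥ 2t+1, and let F be a cover-free family of 2t-dimensional subspaces of V. If A and B are subspaces of V with A + B = F for some F ∈ F, then |F_A| = 1 or |F_B| = 1, i.e., F is the unique member of F containing A, or F is the unique member of F containing B. -/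
theorem isAntichain_of_finrank_eq {K V : Type*} [DivisionRing K] [AddCommGroup V] [Module K V]
    [FiniteDimensional K V] {F : Set (Submodule K V)} {d : ℕ}
    (hdim : ∀ A ∈ F, Module.finrank K A = d) : IsAntichain (· ≤ ·) F :=
  fun A hA B hB hne hle =>
    hne (Submodule.eq_of_le_of_finrank_eq hle ((hdim A hA).trans (hdim B hB).symm))

section CoverFree

variable {K V : Type*} [Field K] [AddCommGroup V] [Module K V] {F : Set (Submodule K V)}
  {A B : Submodule K V}

theorem IsCoverFree.eq_or_eq_or_eq (hcf : IsCoverFree F) {F₀ F₁ F₂ : Submodule K V}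
    (h₀ : F₀ ∈ F) (h₁ : F₁ ∈ F) (h₂ : F₂ ∈ F) (hle : F₀ ≤ (F₀ ⊓ F₁) ⊔ (F₀ ⊓ F₂)) :
    F₀ = F₁ ∨ F₀ = F₂ ∨ F₁ = F₂ := by
  by_contra! hne
  exact hcf ⟨F₀, F₁, F₂, h₀, h₁, h₂, hne.1, hne.2.1, hne.2.2, hle⟩

theorem IsCoverFree.sup_eq_or_sup_eq (hcf : IsCoverFree F) (hF : IsAntichain (· ≤ ·) F)
    (hAB : A ⊔ B ∈ F) {F₁ F₂ : Submodule K V} (h₁ : F₁ ∈ F) (h₂ : F₂ ∈ F)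
    (hA : A ≤ F₁) (hB : B ≤ F₂) : A ⊔ B = F₁ ∨ A ⊔ B = F₂ := by
  have hcover : A ⊔ B ≤ ((A ⊔ B) ⊓ F₁) ⊔ ((A ⊔ B) ⊓ F₂) :=
    sup_le_sup (le_inf le_sup_left hA) (le_inf le_sup_right hB)
  rcases hcf.eq_or_eq_or_eq hAB h₁ h₂ hcover with h | h | rfl
  · exact Or.inl h
  · exact Or.inr h
  · exact Or.inl (hF.eq hAB h₁ (sup_le hA hB))

theorem stmt10_general (hcf : IsCoverFree F) (hF : IsAntichain (· ≤ ·) F) (hAB : A ⊔ B ∈ F) :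
    {G ∈ F | A ≤ G} = {A ⊔ B} ∨ {G ∈ F | B ≤ G} = {A ⊔ B} := by
  have hA : A ⊔ B ∈ {G ∈ F | A ≤ G} := ⟨hAB, le_sup_left⟩
  have hB : A ⊔ B ∈ {G ∈ F | B ≤ G} := ⟨hAB, le_sup_right⟩
  refine (Set.eq_singleton_or_nontrivial hA).imp_right fun hA' =>
    (Set.eq_singleton_or_nontrivial hB).resolve_right fun hB' => ?_
  obtain ⟨F₁, ⟨h₁, hAF₁⟩, hne₁⟩ := hA'.exists_ne (A ⊔ B)
  obtain ⟨F₂, ⟨h₂, hBF₂⟩, hne₂⟩ := hB'.exists_ne (A ⊔ B)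
  exact (hcf.sup_eq_or_sup_eq hF hAB h₁ h₂ hAF₁ hBF₂).elim hne₁.symm hne₂.symm

end CoverFree

theorem stmt10 (q n t : ℕ) (K : Type*) [Field K] [Fintype K] (hK : Fintype.card K = q)
    (V : Type*) [AddCommGroup V] [Module K V] [FiniteDimensional K V]
    (hV : Module.finrank K V = n) (hn : 2 * t + 1 ≤ n)
    (F : Set (Submodule K V)) (hdim : ∀ A ∈ F, Module.finrank K A = 2 * t)
    (hcf : IsCoverFree F)
    (A B F₀ : Submodule K V) (hF₀ : F₀ ∈ F) (hAB : A ⊔ B = F₀) :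
    {G ∈ F | A ≤ G}.ncard = 1 ∨ {G ∈ F | B ≤ G}.ncard = 1 := by
  subst hAB
  exact (stmt10_general hcf (isAntichain_of_finrank_eq hdim) hF₀).imp
    (fun h => Set.ncard_eq_one.2 ⟨_, h⟩) (fun h => Set.ncard_eq_one.2 ⟨_, h⟩)
end
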